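/- Let X be an implicative-orthomodular algebra. For all x, y, z ∈ X, (x ⊓ y) ⊓ (y ⊓ z) = (x ⊓ y) ⊓ z and (x ∪ y) ∪ (y ∪ z) = (x ∪ y) ∪ z. -/

import Mathlib

/-!
The algebra is residuated: `x ⊙ y → z = x → (y → z)`, and `x ⊓ y = y ⊙ (y → x)`. If `a = x ⊓ y`,
currying gives
`a ⊓ (y ⊓ z) = z ⊙ ((z → y) ⊙ ((z → y) → (z → a))) = z ⊙ ((z → a) ⊓ (z → y))`, whereas
`a ⊓ z = z ⊙ (z → a)`. So it suffices that `z → a ≤_Q z → y` (`inf_imp_of_odot`). As `a` is of the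
form `y ⊙ u`, the dual of (IOM) yields `y = (y → a) → a` (`imp_odot_imp_odot`), hence by exchange
`z → y = (y → a) → (z → a)`, and (IOM) applies again. The identity for `∪` follows by De Morgan
duality.
-/

/-- An involutive BE algebra `(X, →, 0, 1)`. -/
structure InvBE (X : Type*) where
  imp : X → X → X
  one : X
  zero : X
  imp_self : ∀ x, imp x x = one
  imp_one : ∀ x, imp x one = one
  one_imp : ∀ x, imp one x = x
  exchange : ∀ x y z, imp x (imp y z) = imp y (imp x z)
  zero_imp : ∀ x, imp zero x = one
  imp_involutive : ∀ x, imp (imp x zero) zero = x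

namespace InvBE

variable {X : Type*} (A : InvBE X)

/-- `x* := x → 0`. -/
def neg (x : X) : X := A.imp x A.zero

/-- `x ⊓ y := ((x* → y*) → y*)*`. -/
def inf (x y : X) : X := A.neg (A.imp (A.imp (A.neg x) (A.neg y)) (A.neg y))

/-- `x ∪ y := (x → y) → y`. -/
def sup (x y : X) : X := A.imp (A.imp x y) y

/-- `x ⊙ y := (x → y*)*`. -/
def odot (x y : X) : X := A.neg (A.imp x (A.neg y))

/-- `x ⊕ y := (x* ⊙ y*)*`. -/
def oplus (x y : X) : X := A.neg (A.odot (A.neg x) (A.neg y))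

/-- `x ≤_Q y` iff `x = x ⊓ y`. -/
def leQ (x y : X) : Prop := x = A.inf x y

/-- `x ≤ y` iff `x → y = 1`. -/
def le (x y : X) : Prop := A.imp x y = A.one

/-- (IOM): `x ⊓ (y → x) = x` for all `x, y`. -/
def IOM : Prop := ∀ x y, A.inf x (A.imp y x) = x

/-- (QW): `x → ((x ⊓ y) ⊓ (z ⊓ x)) = (x → y) ⊓ (x → z)` for all `x, y, z`. -/
def QW : Prop :=
  ∀ x y z, A.imp x (A.inf (A.inf x y) (A.inf z x)) = A.inf (A.imp x y) (A.imp x z)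

/-- A filter: nonempty, closed under `⊙`, upward closed for `≤_Q`. -/
def IsFilter (F : Set X) : Prop :=
  F.Nonempty ∧ (∀ x ∈ F, ∀ y ∈ F, A.odot x y ∈ F) ∧
    (∀ x ∈ F, ∀ y : X, A.leQ x y → y ∈ F)

/-- A deductive system: contains `1` and is closed under modus ponens. -/
def IsDS (F : Set X) : Prop :=
  A.one ∈ F ∧ ∀ x y : X, x ∈ F → A.imp x y ∈ F → y ∈ F

/-- `pow x n` is the `⊙`-product of `n + 1` copies of `x`, i.e. `x^(n+1)`. -/
def pow (x : X) : ℕ → X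
  | 0 => x
  | n + 1 => A.odot x (pow x n)

/-- A maximal filter: proper and not contained in any other proper filter. -/
def IsMaximalFilter (F : Set X) : Prop :=
  A.IsFilter F ∧ F ≠ Set.univ ∧
    ∀ G : Set X, A.IsFilter G → F ⊆ G → G ≠ Set.univ → G = F

/-- A strongly maximal filter: for every `x ∉ F` there is `n ≥ 1` with `(xⁿ)* ∈ F`. -/
def IsStronglyMaximalFilter (F : Set X) : Prop :=
  A.IsFilter F ∧ ∀ x : X, x ∉ F → ∃ n : ℕ, A.neg (A.pow x n) ∈ F

/-- `x ≡_F y` iff there is `f` with `x, y ≤_Q f` and `f → x, f → y ∈ F`. -/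
def cong (F : Set X) (x y : X) : Prop :=
  ∃ f : X, A.leQ x f ∧ A.leQ y f ∧ A.imp f x ∈ F ∧ A.imp f y ∈ F

end InvBE

namespace InvBE

variable {X : Type*} (A : InvBE X)

theorem neg_neg' (x : X) : A.neg (A.neg x) = x := A.imp_involutive x

theorem neg_imp_neg (x y : X) : A.imp (A.neg y) (A.neg x) = A.imp x y := by
  have h := A.exchange (A.neg y) x A.zero
  change A.imp (A.neg y) (A.neg x) = A.imp x (A.neg (A.neg y)) at h
  rwa [neg_neg'] at h

theorem odot_comm' (x y : X) : A.odot x y = A.odot y x :=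
  congrArg A.neg (A.exchange x y A.zero)

/-- Residuation in its curried form. -/
theorem odot_imp (x y z : X) : A.imp (A.odot x y) z = A.imp x (A.imp y z) := by
  rw [← neg_imp_neg, odot, neg_neg', A.exchange, neg_imp_neg]

theorem odot_assoc' (x y z : X) : A.odot (A.odot x y) z = A.odot x (A.odot y z) := by
  rw [odot, odot_imp, odot, odot, neg_neg']

theorem inf_eq_odot (x y : X) : A.inf x y = A.odot y (A.imp y x) := by
  rw [odot_comm', inf, neg_imp_neg, odot]

theorem sup_eq_neg_inf (x y : X) : A.sup x y = A.neg (A.inf (A.neg x) (A.neg y)) := by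
  simp only [inf, sup, neg_neg']

variable {A}

/-- The dual of (IOM): `y ∪ (y ⊙ u) = y`. -/
theorem imp_odot_imp_odot (hA : A.IOM) (y u : X) :
    A.imp (A.imp y (A.odot y u)) (A.odot y u) = y := by
  have h := congrArg A.neg (hA (A.neg y) u)
  simp only [inf, neg_neg'] at h
  rw [A.odot_comm' y u]
  exact h

/-- `z → ·` is monotone for `≤_Q`, for a smaller element given in the form `y ⊙ u`. -/
theorem inf_imp_of_odot (hA : A.IOM) (y u z : X) :
    A.inf (A.imp z (A.odot y u)) (A.imp z y) = A.imp z (A.odot y u) := by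
  have h := A.exchange z (A.imp y (A.odot y u)) (A.odot y u)
  rw [imp_odot_imp_odot hA] at h
  rw [h]
  exact hA _ _

theorem inf_inf_inf (hA : A.IOM) (x y z : X) :
    A.inf (A.inf x y) (A.inf y z) = A.inf (A.inf x y) z := by
  rw [A.inf_eq_odot x y]
  generalize A.imp y x = u
  have h := inf_imp_of_odot hA y u z
  rw [inf_eq_odot] at h
  rw [A.inf_eq_odot y z, A.inf_eq_odot _ z, inf_eq_odot,
    A.odot_comm' z (A.imp z y), odot_imp, A.odot_comm' _ z, odot_assoc', h]

end InvBE

/-- In an IOM algebra, `(x ⊓ y) ⊓ (y ⊓ z) = (x ⊓ y) ⊓ z` and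
`(x ∪ y) ∪ (y ∪ z) = (x ∪ y) ∪ z`. -/
theorem stmt_10 {X : Type*} (A : InvBE X) (hA : A.IOM) :
    ∀ x y z : X,
      A.inf (A.inf x y) (A.inf y z) = A.inf (A.inf x y) z ∧
        A.sup (A.sup x y) (A.sup y z) = A.sup (A.sup x y) z := by
  intro x y z
  refine ⟨InvBE.inf_inf_inf hA x y z, ?_⟩
  simp only [InvBE.sup_eq_neg_inf, InvBE.neg_neg', InvBE.inf_inf_inf hA]
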